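/- Assume the fixed subterm deduction system contains a composition rule x₁, x₂ → f(x₁,x₂) where f is a function symbol of arity 2 that does not occur in any other rule of the system. A constraint system S is satisfiable (i.e., admits a solution) if and only if there exists a solution σ' of S whose size is polynomial in |Sub(S)|. -/

import Mathlib

/-! ### Terms -/

/-- First-order terms: variables, ordinary constants, nonces (an infinite
subset of the constants), and function applications. -/
inductive Term : Type
  | var : ℕ → Term
  | cst : ℕ → Term
  | nonce : ℕ → Term
  | func : ℕ → List Term → Term

namespace Term

/-- The subterm relation. -/
inductive IsSubterm : Term → Term → Prop
  | refl (t : Term) : IsSubterm t t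
  | func {s t : Term} {f : ℕ} {args : List Term} :
      t ∈ args → IsSubterm s t → IsSubterm s (func f args)

/-- The set of subterms of a term. -/
def sub (t : Term) : Set Term := {s | IsSubterm s t}

/-- The set of (indices of) variables of a term. -/
def varsSet (t : Term) : Set ℕ := {x | IsSubterm (var x) t}

/-- A term is ground if it has no variables. -/
def Ground (t : Term) : Prop := varsSet t = ∅

/-- The term is a variable. -/
def IsVar : Term → Prop
  | var _ => True
  | _ => False

/-- Application of a substitution to a term. -/
noncomputable def subst (σ : ℕ → Term) : Term → Term
  | var x => σ x
  | cst c => cst c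
  | nonce n => nonce n
  | func f args => func f (args.attach.map (fun a => Term.subst σ a.1))
decreasing_by
  have := List.sizeOf_lt_of_mem a.2
  simp only [Term.func.sizeOf_spec]
  omega

/-- The function symbol `f` occurs in the term `t`. -/
def OccursFun (f : ℕ) (t : Term) : Prop := ∃ args, IsSubterm (func f args) t

end Term

/-! ### Substitutions -/

/-- Substitutions (maps from variables to terms). -/
abbrev Subst := ℕ → Term

namespace Subst

/-- The domain of a substitution. -/
def dom (σ : Subst) : Set ℕ := {x | σ x ≠ .var x}

/-- The image of a substitution. -/
def img (σ : Subst) : Set Term := {t | ∃ x ∈ dom σ, σ x = t}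

/-- Idempotency of a substitution. -/
def Idem (σ : Subst) : Prop := ∀ x, (σ x).subst σ = σ x

/-- A substitution is ground if its image consists of ground terms. -/
def IsGround (σ : Subst) : Prop := ∀ x ∈ dom σ, (σ x).Ground

open Classical in
/-- Union of two substitutions (intended for disjoint domains). -/
noncomputable def union (σ τ : Subst) : Subst := fun x =>
  if σ x = Term.var x then τ x else σ x

end Subst

/-- Subterms of a set of terms. -/
def subT (T : Set Term) : Set Term := {s | ∃ t ∈ T, Term.IsSubterm s t}

/-- Variables of a set of terms. -/
def varsT (T : Set Term) : Set ℕ := {x | ∃ t ∈ T, Term.IsSubterm (.var x) t}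

/-- DAG size of a set of terms: number of its subterms. -/
noncomputable def sizeT (T : Set Term) : ℕ := (subT T).ncard

/-- Size of a substitution: DAG size of its image. -/
noncomputable def sizeSubst (σ : Subst) : ℕ := sizeT σ.img

/-! ### Deduction systems, steps and derivations -/

/-- A deduction system: a finite set of (standard) deduction rules, each rule
being a pair (left-hand sides, right-hand side) whose right-hand-side variables
occur in the left-hand sides.  Nonce-creation rules and reception rules are
built into the notions of steps/derivations below. -/
structure DeductionSystem where
  rules : Set (List Term × Term)
  finite : rules.Finite
  wf : ∀ p ∈ rules, p.2.varsSet ⊆ varsT {u | u ∈ p.1}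

/-- A step of a derivation: a reception `? → t` or a standard deduction `l → r`
(nonce creations are standard deductions with empty left-hand side). -/
inductive Step
  | recv : Term → Step
  | std : List Term → Term → Step

namespace Step

/-- Right-hand side of a step. -/
def rhs : Step → Term
  | recv t => t
  | std _ r => r

/-- All terms occurring in the step. -/
def terms : Step → Set Term
  | recv t => {t}
  | std l r => {r} ∪ {u | u ∈ l}

end Step

/-- The set of right-hand sides of the first `k` steps of `D`. -/
def RHSset (D : List Step) (k : ℕ) : Set Term :=
  {r | ∃ j < k, ∃ s, D[j]? = some s ∧ s.rhs = r}

/-- A step is a deduction of the system `DS`: a reception of a ground term, a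
nonce creation, or a ground instance of a (standard) rule of `DS`. -/
def IsDeduction (DS : DeductionSystem) (s : Step) : Prop :=
  match s with
  | .recv t => t.Ground
  | .std l r =>
      (∀ u ∈ l, u.Ground) ∧ r.Ground ∧
        ((l = [] ∧ ∃ n, r = Term.nonce n) ∨
          ∃ p ∈ DS.rules, ∃ σ : Subst,
            l = p.1.map (Term.subst σ) ∧ r = p.2.subst σ)

/-- A derivation: a sequence of deductions in which the left-hand side of every
standard step has already been deduced. -/
def IsDerivation (DS : DeductionSystem) (D : List Step) : Prop :=
  (∀ s ∈ D, IsDeduction DS s) ∧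
  ∀ (i : ℕ) (l : List Term) (r : Term), D[i]? = some (Step.std l r) → ∀ u ∈ l, u ∈ RHSset D i

/-- The position of the first reception of `D` at index `≥ k` (or `|D|` if
there is none): (0-indexed version of) `Next(D, ·)`. -/
noncomputable def nextRecv (D : List Step) (k : ℕ) : ℕ :=
  sInf ({D.length} ∪ {j | k ≤ j ∧ ∃ t, D[j]? = some (Step.recv t)})

/-- `Der DS K`: the set of ground terms derivable from the knowledge `K`. -/
def Der (DS : DeductionSystem) (K : Set Term) : Set Term :=
  {t | ∃ D : List Step, IsDerivation DS D ∧
        (∀ (j : ℕ) (u : Term), D[j]? = some (Step.recv u) → u ∈ K) ∧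
        ∃ l, D.getLast? = some (Step.std l t)}

/-- No term is deduced twice in `D` by a standard rule. -/
def NoDuplicateStd (D : List Step) : Prop :=
  ∀ (i j : ℕ) (li lj : List Term) (r : Term), D[i]? = some (Step.std li r) → D[j]? = some (Step.std lj r) → i = j

/-- `(T,σ)`-maximality of a derivation. -/
def MaximalDeriv (DS : DeductionSystem) (T : Set Term) (σ : Subst) (D : List Step) : Prop :=
  ∀ t ∈ subT T, ∀ k ≤ D.length,
    t.subst σ ∈ Der DS (RHSset D k) → t.subst σ ∈ RHSset D (nextRecv D k)

/-! ### Constraint systems -/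

/-- A constraint: a reception `?t`, an emission `!t` or a negative
constraint `♮t`. -/
inductive Constraint
  | recv : Term → Constraint
  | send : Term → Constraint
  | neg : Term → Constraint

namespace Constraint

/-- The term of a constraint. -/
def term : Constraint → Term
  | recv t => t
  | send t => t
  | neg t => t

/-- The constraint is a send constraint. -/
def isSend : Constraint → Bool
  | send _ => true
  | _ => false

/-- Apply a substitution to a constraint. -/
noncomputable def map (θ : Subst) : Constraint → Constraint
  | recv t => recv (t.subst θ)
  | send t => send (t.subst θ)
  | neg t => neg (t.subst θ)

end Constraint

/-- A (pre-)constraint system is a finite sequence of constraints. -/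
abbrev CSystem := List Constraint

/-- The terms of a constraint system. -/
def csTerms (S : CSystem) : Set Term := {t | ∃ c ∈ S, c.term = t}

/-- `Sub(S)`. -/
def csSub (S : CSystem) : Set Term := subT (csTerms S)

/-- `vars(S)`. -/
def csVars (S : CSystem) : Set ℕ := varsT (csTerms S)

/-- `|Sub(S)|`. -/
noncomputable def csSize (S : CSystem) : ℕ := sizeT (csTerms S)

/-- Apply a substitution to all constraints of a system. -/
noncomputable def csSubst (S : CSystem) (θ : Subst) : CSystem := S.map (Constraint.map θ)

/-- Origination and determination: `S` is a genuine constraint system. -/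
def IsCS (S : CSystem) : Prop :=
  (∀ (i : ℕ) (t : Term), S[i]? = some (Constraint.send t) →
      t.varsSet ⊆ {x | ∃ j < i, ∃ u : Term, S[j]? = some (Constraint.recv u) ∧ x ∈ u.varsSet}) ∧
  (∀ (i : ℕ) (t : Term), S[i]? = some (Constraint.neg t) →
      t.varsSet ⊆ {x | ∃ (j : ℕ) (u : Term), S[j]? = some (Constraint.recv u) ∧ x ∈ u.varsSet})

/-- The knowledge produced by the send constraints up to (and including) index
`i`, instantiated by `σ` (this is `{tⱼσ : j ≤ prev(i), S[j] = !tⱼ}`). -/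
def knowledge (S : CSystem) (σ : Subst) (i : ℕ) : Set Term :=
  {u | ∃ j ≤ i, ∃ t, S[j]? = some (Constraint.send t) ∧ u = t.subst σ}

/-- A solution of a constraint system. -/
structure IsSolution (DS : DeductionSystem) (S : CSystem) (σ : Subst) : Prop where
  ground : σ.IsGround
  idem : σ.Idem
  dom_eq : σ.dom = csVars S
  recv_mem : ∀ (i : ℕ) (t : Term), S[i]? = some (Constraint.recv t) → t.subst σ ∈ Der DS (knowledge S σ i)
  neg_not_mem : ∀ (i : ℕ) (t : Term), S[i]? = some (Constraint.neg t) → t.subst σ ∉ Der DS (knowledge S σ i)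

/-- `prev(i)`: the last send index `≤ i` of `S`, if any. -/
def prevSend (S : CSystem) (i : ℕ) : Option ℕ :=
  ((List.range (i + 1)).filter (fun j => ((S[j]?).map Constraint.isSend).getD false)).max?

/-- `(S,σ)`-compliance of a derivation `D` with the mapping `α`: `α` is a
strictly increasing bijection from the send indices of `S` onto the reception
positions of `D`, sending `!t` to the reception `? → tσ`. -/
structure Compliant (S : CSystem) (σ : Subst) (D : List Step) (α : ℕ → ℕ) : Prop where
  mono : ∀ (i j : ℕ) (ti tj : Term), S[i]? = some (Constraint.send ti) →
    S[j]? = some (Constraint.send tj) → i < j → α i < α j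
  maps : ∀ (i : ℕ) (t : Term), S[i]? = some (Constraint.send t) →
    D[α i]? = some (Step.recv (t.subst σ))
  surj : ∀ (j : ℕ) (u : Term), D[j]? = some (Step.recv u) →
    ∃ i t, S[i]? = some (Constraint.send t) ∧ α i = j

/-- Position in `D` of the first reception strictly after the reception
corresponding (via `α`) to the last send constraint `≤ i` of `S` (or the first
reception of `D` if there is no such send): this is `Next(D, α(prev(i)))`. -/
noncomputable def cutoff (S : CSystem) (D : List Step) (α : ℕ → ℕ) (i : ℕ) : ℕ :=
  match prevSend S i with
  | none => nextRecv D 0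
  | some p => nextRecv D (α p + 1)

/-- `D, σ, α ⊢ S`: the derivation `D` is a proof of `σ ⊨ S`. -/
structure IsProof (DS : DeductionSystem) (S : CSystem) (σ : Subst)
    (D : List Step) (α : ℕ → ℕ) : Prop where
  deriv : IsDerivation DS D
  compliant : Compliant S σ D α
  recv_proved : ∀ (i : ℕ) (t : Term), S[i]? = some (Constraint.recv t) →
    ∃ j < cutoff S D α i, ∃ s, D[j]? = some s ∧ s.rhs = t.subst σ
  neg_not_mem : ∀ (i : ℕ) (t : Term), S[i]? = some (Constraint.neg t) →
    t.subst σ ∉ Der DS (knowledge S σ i)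

/-! ### Subterm deduction systems -/

/-- A composition rule: `x₁,…,xₙ → f(x₁,…,xₙ)` with pairwise distinct
variables `xᵢ`. -/
def IsCompRule (p : List Term × Term) : Prop :=
  ∃ (f : ℕ) (xs : List ℕ), xs.Nodup ∧ p.1 = xs.map Term.var ∧
    p.2 = Term.func f (xs.map Term.var)

/-- A decomposition rule: the right-hand side is a subterm of a left-hand
side. -/
def IsDecompRule (p : List Term × Term) : Prop :=
  ∃ l ∈ p.1, p.2 ∈ l.sub

/-- A subterm deduction system: every standard rule is a composition or a
decomposition rule. -/
def SubtermSystem (DS : DeductionSystem) : Prop :=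
  ∀ p ∈ DS.rules, IsCompRule p ∨ IsDecompRule p

/-- A step is a composition: a reception, a nonce creation, or an instance of
a composition rule of `DS`. -/
def IsCompositionStep (DS : DeductionSystem) (s : Step) : Prop :=
  match s with
  | .recv _ => True
  | .std l r =>
      (l = [] ∧ ∃ n, r = Term.nonce n) ∨
        ∃ p ∈ DS.rules, IsCompRule p ∧
          ∃ σ : Subst, l = p.1.map (Term.subst σ) ∧ r = p.2.subst σ

/-- `l → r` is an instance (not necessarily ground) of a standard deduction
rule of the system. -/
def StdRuleInstance (DS : DeductionSystem) (l : List Term) (r : Term) : Prop :=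
  (l = [] ∧ ∃ n, r = Term.nonce n) ∨
    ∃ p ∈ DS.rules, ∃ σ : Subst, l = p.1.map (Term.subst σ) ∧ r = p.2.subst σ

/-- DAG size of a rule. -/
noncomputable def ruleSize (p : List Term × Term) : ℕ :=
  sizeT ({p.2} ∪ {u | u ∈ p.1})

/-- Maximal size of a decomposition rule of the system. -/
noncomputable def maxDecompSize (DS : DeductionSystem) : ℕ :=
  sSup {n | ∃ p ∈ DS.rules, IsDecompRule p ∧ ruleSize p = n}

/-! ### Localization -/

/-- `T` localizes the derivation `D` for `σ`. -/
def Localizes (DS : DeductionSystem) (T : Set Term) (σ : Subst) (D : List Step) : Prop :=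
  ∀ (i : ℕ) (l : List Term) (r : Term), D[i]? = some (Step.std l r) →
    ∀ t ∈ subT T, ¬ t.IsVar → t.subst σ = r →
      ∃ ts : List Term, (∀ u ∈ ts, u ∈ subT T) ∧
        (∀ u ∈ ts, u.subst σ ∈ RHSset D i) ∧ StdRuleInstance DS ts t

/-- `T` one-to-one localizes `D` for `σ`. -/
def OneToOneLocalizes (DS : DeductionSystem) (T : Set Term) (σ : Subst)
    (D : List Step) : Prop :=
  Localizes DS T σ D ∧ Set.InjOn (Term.subst σ) (subT T)

/-! ### Terms of a derivation, `Out(S)` -/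

/-- The terms occurring in a derivation. -/
def derTerms (D : List Step) : Set Term := {t | ∃ s ∈ D, t ∈ s.terms}

/-- `Sub(D)`. -/
def subD (D : List Step) : Set Term := subT (derTerms D)

/-- The terms of the send constraints of `S`. -/
def outTerms (S : CSystem) : Set Term := {t | Constraint.send t ∈ S}

/-! ### Milestone sequences -/

/-- An element of a milestone sequence: `→ t` or `? → t`. -/
inductive MStep
  | ded : Term → MStep
  | recvm : Term → MStep

/-- The term of a milestone element. -/
def MStep.term : MStep → Term
  | ded t => t
  | recvm t => t

/-- `M` is a milestone candidate sequence of `D` for `(T,σ)`. -/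
def IsMilestoneOf (T : Set Term) (σ : Subst) (D : List Step) (M : List MStep) : Prop :=
  (∀ m ∈ M, m.term ∈ subT T) ∧
  ∃ α : ℕ → ℕ, (∀ i j, i < j → j < M.length → α i < α j) ∧
    ∀ (i : ℕ) (m : MStep), M[i]? = some m →
      match m with
      | MStep.recvm t => D[α i]? = some (Step.recv (t.subst σ))
      | MStep.ded t => ∃ l, D[α i]? = some (Step.std l (t.subst σ))

/-- `M` is the `(T,σ)`-milestone sequence of `D`: a candidate of maximal
length. -/
def IsMilestoneSeq (T : Set Term) (σ : Subst) (D : List Step) (M : List MStep) : Prop :=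
  IsMilestoneOf T σ D M ∧ ∀ M', IsMilestoneOf T σ D M' → M'.length ≤ M.length

/-! ### Free pairing symbol -/

/-- `f` occurs in the rule `p`. -/
def OccursInRule (f : ℕ) (p : List Term × Term) : Prop :=
  (∃ t ∈ p.1, t.OccursFun f) ∨ p.2.OccursFun f

/-- The system contains a composition rule `x₁, x₂ → f(x₁,x₂)` where the
binary symbol `f` occurs in no other rule. -/
def FreePairing (DS : DeductionSystem) : Prop :=
  ∃ (f x₁ x₂ : ℕ), x₁ ≠ x₂ ∧
    ([Term.var x₁, Term.var x₂], Term.func f [Term.var x₁, Term.var x₂]) ∈ DS.rules ∧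
    ∀ p ∈ DS.rules, OccursInRule f p →
      p = ([Term.var x₁, Term.var x₂], Term.func f [Term.var x₁, Term.var x₂])

/-! ### Unification -/

/-- `σ` is a unifier of the unification system `U`. -/
def IsUnifier (U : Set (Term × Term)) (σ : Subst) : Prop :=
  ∀ pq ∈ U, Term.subst σ pq.1 = Term.subst σ pq.2

/-- `θ` is a most general unifier of `U`. -/
def IsMGU (U : Set (Term × Term)) (θ : Subst) : Prop :=
  IsUnifier U θ ∧ ∀ σ, IsUnifier U σ → ∃ τ : Subst, ∀ x, σ x = (θ x).subst τ

/-- The terms of a unification system. -/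
def unifTerms (U : Set (Term × Term)) : Set Term :=
  {t | ∃ pq ∈ U, t = pq.1 ∨ t = pq.2}

/-- The variables of a unification system. -/
def unifVars (U : Set (Term × Term)) : Set ℕ := varsT (unifTerms U)
/-! ### Basic term lemmas -/

theorem Term.ind' {P : Term → Prop} (hv : ∀ x, P (.var x)) (hc : ∀ c, P (.cst c))
    (hn : ∀ n, P (.nonce n)) (hf : ∀ f args, (∀ a ∈ args, P a) → P (.func f args)) :
    ∀ t, P t
  | .var x => hv x
  | .cst c => hc c
  | .nonce n => hn n
  | .func f args => hf f args (fun a ha => Term.ind' hv hc hn hf a)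
decreasing_by
  have := List.sizeOf_lt_of_mem ha
  simp only [Term.func.sizeOf_spec]
  omega

theorem subst_var (τ : Subst) (x : ℕ) : (Term.var x).subst τ = τ x := by
  simp [Term.subst]

theorem subst_cst (τ : Subst) (x : ℕ) : (Term.cst x).subst τ = .cst x := by
  simp [Term.subst]

theorem subst_nonce (τ : Subst) (x : ℕ) : (Term.nonce x).subst τ = .nonce x := by
  simp [Term.subst]

theorem subst_func (τ : Subst) (f : ℕ) (args : List Term) :
    (Term.func f args).subst τ = .func f (args.map (Term.subst τ)) := by
  rw [Term.subst]
  congr 1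
  exact List.attach_map_val (l := args) (f := Term.subst τ)

/-- Top-down replacement in a term. -/
noncomputable def Term.rep (A : Term → Option Term) : Term → Term
  | var x => (A (var x)).getD (var x)
  | cst c => (A (cst c)).getD (cst c)
  | nonce n => (A (nonce n)).getD (nonce n)
  | func f args => (A (func f args)).getD (func f (args.attach.map (fun a => Term.rep A a.1)))
decreasing_by
  have := List.sizeOf_lt_of_mem a.2
  simp only [Term.func.sizeOf_spec]
  omega

theorem rep_func' (A : Term → Option Term) (f : ℕ) (args : List Term) :
    (Term.func f args).rep A = (A (.func f args)).getD (.func f (args.map (Term.rep A))) := by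
  rw [Term.rep]
  congr 2
  exact List.attach_map_val (l := args) (f := Term.rep A)

theorem rep_some {A : Term → Option Term} {t w : Term} (h : A t = some w) : t.rep A = w := by
  cases t <;> simp [Term.rep, h]

theorem rep_func {A : Term → Option Term} {f : ℕ} {args : List Term}
    (h : A (.func f args) = none) :
    (Term.func f args).rep A = .func f (args.map (Term.rep A)) := by
  rw [rep_func', h]; rfl

theorem rep_cst {A : Term → Option Term} {c : ℕ}
    (h : A (.cst c) = none) : (Term.cst c).rep A = .cst c := by
  simp [Term.rep, h]

theorem rep_nonce {A : Term → Option Term} {c : ℕ}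
    (h : A (.nonce c) = none) : (Term.nonce c).rep A = .nonce c := by
  simp [Term.rep, h]

theorem rep_var {A : Term → Option Term} {c : ℕ}
    (h : A (.var c) = none) : (Term.var c).rep A = .var c := by
  simp [Term.rep, h]

theorem IsSubterm.trans' {a b c : Term} (h1 : Term.IsSubterm a b) (h2 : Term.IsSubterm b c) :
    Term.IsSubterm a c := by
  induction h2 with
  | refl => exact h1
  | func hm _ ih => exact .func hm ih

theorem isSubterm_func_iff {s : Term} {f : ℕ} {args : List Term} :
    Term.IsSubterm s (.func f args) ↔ s = .func f args ∨ ∃ a ∈ args, Term.IsSubterm s a := by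
  constructor
  · intro h
    cases h with
    | refl => exact .inl rfl
    | func hm h => exact .inr ⟨_, hm, h⟩
  · rintro (rfl | ⟨a, ha, h⟩)
    · exact .refl _
    · exact .func ha h

theorem isSubterm_var_iff {s : Term} {x : ℕ} : Term.IsSubterm s (.var x) ↔ s = .var x := by
  constructor
  · intro h; cases h; rfl
  · rintro rfl; exact .refl _

theorem isSubterm_cst_iff {s : Term} {x : ℕ} : Term.IsSubterm s (.cst x) ↔ s = .cst x := by
  constructor
  · intro h; cases h; rfl
  · rintro rfl; exact .refl _

theorem isSubterm_nonce_iff {s : Term} {x : ℕ} : Term.IsSubterm s (.nonce x) ↔ s = .nonce x := by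
  constructor
  · intro h; cases h; rfl
  · rintro rfl; exact .refl _

theorem sub_finite (t : Term) : {s | Term.IsSubterm s t}.Finite := by
  induction t using Term.ind' with
  | hv x => simp [isSubterm_var_iff]
  | hc x => simp [isSubterm_cst_iff]
  | hn x => simp [isSubterm_nonce_iff]
  | hf f args ih =>
    have : {s | Term.IsSubterm s (.func f args)} =
        {.func f args} ∪ ⋃ a ∈ {a | a ∈ args}, {s | Term.IsSubterm s a} := by
      ext s; simp [isSubterm_func_iff]
    rw [this]
    exact (Set.finite_singleton _).union ((List.finite_toSet args).biUnion ih)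

theorem subT_finite {T : Set Term} (h : T.Finite) : (subT T).Finite := by
  have : subT T = ⋃ a ∈ T, {s | Term.IsSubterm s a} := by
    ext s; simp [subT]
  rw [this]
  exact h.biUnion (fun a _ => sub_finite a)

theorem isSubterm_subst {s t : Term} (τ : Subst) (h : Term.IsSubterm s t) :
    Term.IsSubterm (s.subst τ) (t.subst τ) := by
  induction h with
  | refl => exact .refl _
  | func hm _ ih =>
    rw [subst_func]
    exact .func (List.mem_map_of_mem hm) ih

/-- Subterms of an instance. -/
theorem isSubterm_of_subst {τ : Subst} {t u : Term} (h : Term.IsSubterm u (t.subst τ)) :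
    (∃ q, Term.IsSubterm q t ∧ ¬ q.IsVar ∧ u = q.subst τ) ∨
      ∃ x, Term.IsSubterm (.var x) t ∧ Term.IsSubterm u (τ x) := by
  induction t using Term.ind' with
  | hv x => rw [subst_var] at h; exact .inr ⟨x, .refl _, h⟩
  | hc x =>
    rw [subst_cst, isSubterm_cst_iff] at h
    exact .inl ⟨_, .refl _, by simp [Term.IsVar], by rw [subst_cst, h]⟩
  | hn x =>
    rw [subst_nonce, isSubterm_nonce_iff] at h
    exact .inl ⟨_, .refl _, by simp [Term.IsVar], by rw [subst_nonce, h]⟩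
  | hf f args ih =>
    rw [subst_func, isSubterm_func_iff] at h
    rcases h with h | ⟨a, ha, h⟩
    · exact .inl ⟨_, .refl _, by simp [Term.IsVar], by rw [subst_func, h]⟩
    · obtain ⟨b, hb, rfl⟩ := List.mem_map.1 ha
      rcases ih b hb h with ⟨q, h1, h2⟩ | ⟨x, h1, h2⟩
      · exact .inl ⟨q, .func hb h1, h2⟩
      · exact .inr ⟨x, .func hb h1, h2⟩

theorem ground_iff {t : Term} : t.Ground ↔ ∀ x, ¬ Term.IsSubterm (.var x) t := by
  simp [Term.Ground, Term.varsSet, Set.eq_empty_iff_forall_notMem]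

theorem ground_sub {s t : Term} (h : Term.IsSubterm s t) (ht : t.Ground) : s.Ground := by
  rw [ground_iff] at *
  exact fun x hx => ht x (IsSubterm.trans' hx h)

theorem ground_subst_iff {t : Term} {τ : Subst} :
    (t.subst τ).Ground ↔ ∀ x, Term.IsSubterm (.var x) t → (τ x).Ground := by
  constructor
  · intro h x hx
    exact ground_sub (by simpa [subst_var] using isSubterm_subst τ hx) h
  · intro h
    rw [ground_iff]
    intro x hx
    rcases isSubterm_of_subst hx with ⟨q, _, h2, h3⟩ | ⟨y, h1, h2⟩
    · cases q <;> simp [Term.IsVar, subst_cst, subst_nonce, subst_func] at h2 h3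
    · exact ground_iff.1 (h y h1) x h2

theorem subst_congr {t : Term} {τ θ : Subst}
    (h : ∀ x, Term.IsSubterm (.var x) t → τ x = θ x) : t.subst τ = t.subst θ := by
  induction t using Term.ind' with
  | hv x => simpa [subst_var] using h x (.refl _)
  | hc x => simp [subst_cst]
  | hn x => simp [subst_nonce]
  | hf f args ih =>
    rw [subst_func, subst_func]
    congr 1
    exact List.map_congr_left (fun a ha => ih a ha (fun x hx => h x (.func ha hx)))

theorem subst_ground {t : Term} {τ : Subst} (h : t.Ground) : t.subst τ = t := by
  induction t using Term.ind' with
  | hv x => exact absurd (.refl _) (ground_iff.1 h x)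
  | hc x => simp [subst_cst]
  | hn x => simp [subst_nonce]
  | hf f args ih =>
    rw [subst_func]
    congr 1
    conv_rhs => rw [← List.map_id args]
    exact List.map_congr_left (fun a ha => ih a ha (ground_sub (.func ha (.refl _)) h))

theorem rep_subst {A : Term → Option Term} {t : Term} {τ : Subst}
    (h : ∀ q, Term.IsSubterm q t → ¬ q.IsVar → A (q.subst τ) = none) :
    (t.subst τ).rep A = t.subst (fun x => (τ x).rep A) := by
  induction t using Term.ind' with
  | hv x => simp [subst_var]
  | hc x =>
    have := h _ (.refl _) (by simp [Term.IsVar])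
    rw [subst_cst] at *; rw [subst_cst, rep_cst this]
  | hn x =>
    have := h _ (.refl _) (by simp [Term.IsVar])
    rw [subst_nonce] at *; rw [subst_nonce, rep_nonce this]
  | hf f args ih =>
    have := h _ (.refl _) (by simp [Term.IsVar])
    rw [subst_func] at *; rw [subst_func, rep_func this]
    congr 1
    rw [List.map_map]
    exact List.map_congr_left (fun a ha => ih a ha (fun q hq => h q (.func ha hq)))

theorem rep_ground {A : Term → Option Term} (hA : ∀ v w, A v = some w → w.Ground)
    {t : Term} (ht : t.Ground) : (t.rep A).Ground := by
  induction t using Term.ind' with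
  | hv x => exact absurd (.refl _) (ground_iff.1 ht x)
  | hc x =>
    cases h : A (.cst x) with
    | none => rw [rep_cst h]; exact ht
    | some w => rw [rep_some h]; exact hA _ _ h
  | hn x =>
    cases h : A (.nonce x) with
    | none => rw [rep_nonce h]; exact ht
    | some w => rw [rep_some h]; exact hA _ _ h
  | hf f args ih =>
    cases h : A (.func f args) with
    | none =>
      rw [rep_func h, ground_iff]
      intro x hx
      rw [isSubterm_func_iff] at hx
      rcases hx with hx | ⟨a, ha, hx⟩
      · cases hx
      · obtain ⟨b, hb, rfl⟩ := List.mem_map.1 ha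
        exact ground_iff.1 (ih b hb (ground_sub (.func hb (.refl _)) ht)) x hx
    | some w => rw [rep_some h]; exact hA _ _ h

theorem rep_congr {A B : Term → Option Term} {t : Term}
    (h : ∀ u, Term.IsSubterm u t → A u = B u) : t.rep A = t.rep B := by
  induction t using Term.ind' with
  | hv x => simp [Term.rep, h _ (.refl _)]
  | hc x => simp [Term.rep, h _ (.refl _)]
  | hn x => simp [Term.rep, h _ (.refl _)]
  | hf f args ih =>
    rw [rep_func', rep_func', h _ (.refl _)]
    congr 2
    exact List.map_congr_left (fun a ha => ih a ha (fun q hq => h q (.func ha hq)))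

/-- An injective coding of terms. -/
noncomputable def Term.code : Term → ℕ
  | var x => Nat.pair 0 x
  | cst x => Nat.pair 1 x
  | nonce x => Nat.pair 2 x
  | func f args => Nat.pair 3 (Nat.pair f (Encodable.encode (args.attach.map (fun a => Term.code a.1))))
decreasing_by
  have := List.sizeOf_lt_of_mem a.2
  simp only [Term.func.sizeOf_spec]
  omega

theorem code_func (f : ℕ) (args : List Term) : (Term.func f args).code =
    Nat.pair 3 (Nat.pair f (Encodable.encode (args.map Term.code))) := by
  rw [Term.code]
  congr 3
  exact List.attach_map_val (l := args) (f := Term.code)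

theorem map_code_inj {l : List Term} (h : ∀ a ∈ l, ∀ b : Term, a.code = b.code → a = b) :
    ∀ l' : List Term, l.map Term.code = l'.map Term.code → l = l' := by
  induction l with
  | nil => intro l' hl; simpa using hl
  | cons a l ih =>
    intro l' hl
    cases l' with
    | nil => simp at hl
    | cons b l' =>
      simp only [List.map_cons, List.cons.injEq] at hl
      rw [h a (by simp) b hl.1, ih (fun c hc => h c (by simp [hc])) l' hl.2]

theorem code_inj : ∀ s t : Term, s.code = t.code → s = t := by
  intro s
  induction s using Term.ind' with
  | hv x => intro t; cases t <;> simp [Term.code, Nat.pair_eq_pair]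
  | hc x => intro t; cases t <;> simp [Term.code, Nat.pair_eq_pair]
  | hn x => intro t; cases t <;> simp [Term.code, Nat.pair_eq_pair]
  | hf f args ih =>
    intro t ht
    cases t with
    | func g args' =>
      rw [code_func, code_func, Nat.pair_eq_pair, Nat.pair_eq_pair] at ht
      obtain ⟨_, h1, h2⟩ := ht
      rw [h1, map_code_inj ih args' (Encodable.encode_injective h2)]
    | _ => simp [Term.code, Nat.pair_eq_pair] at ht

/-! ### Closure and derivability -/

/-- All standard rules, nonce creations included. -/
def AllR (DS : DeductionSystem) : Set (List Term × Term) :=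
  {p | p ∈ DS.rules ∨ ∃ n, p = ([], Term.nonce n)}

/-- Terms known after at most `n` rounds. -/
def ClN (DS : DeductionSystem) (K : Set Term) : ℕ → Set Term
  | 0 => {t | t ∈ K ∧ t.Ground}
  | n + 1 => ClN DS K n ∪ {t | ∃ p ∈ AllR DS, ∃ τ : Subst, t = p.2.subst τ ∧
      ∀ q ∈ p.1, q.subst τ ∈ ClN DS K n}

/-- Terms derivable by a standard step from those of round `n`. -/
def DrN (DS : DeductionSystem) (K : Set Term) (n : ℕ) : Set Term :=
  {t | ∃ p ∈ AllR DS, ∃ τ : Subst, t = p.2.subst τ ∧ ∀ q ∈ p.1, q.subst τ ∈ ClN DS K n}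

/-- Closure. -/
def Cl (DS : DeductionSystem) (K : Set Term) : Set Term := {t | ∃ n, t ∈ ClN DS K n}

/-- Derivable terms. -/
def Dr (DS : DeductionSystem) (K : Set Term) : Set Term := {t | ∃ n, t ∈ DrN DS K n}

theorem ClN_succ_iff {DS : DeductionSystem} {K : Set Term} {n : ℕ} {t : Term} :
    t ∈ ClN DS K (n + 1) ↔ t ∈ ClN DS K n ∨ t ∈ DrN DS K n := Iff.rfl

theorem ClN_mono {DS : DeductionSystem} {K : Set Term} {m n : ℕ} (h : m ≤ n) :
    ClN DS K m ⊆ ClN DS K n := by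
  induction h with
  | refl => exact fun _ h => h
  | step _ ih => exact fun t ht => .inl (ih ht)

theorem ClN_cases {DS : DeductionSystem} {K : Set Term} {m : ℕ} {t : Term}
    (h : t ∈ ClN DS K m) : t ∈ K ∨ ∃ m' < m, t ∈ DrN DS K m' := by
  induction m with
  | zero => exact .inl h.1
  | succ m ih =>
    rcases ClN_succ_iff.1 h with h | h
    · rcases ih h with h | ⟨m', h1, h2⟩
      · exact .inl h
      · exact .inr ⟨m', by omega, h2⟩
    · exact .inr ⟨m, by omega, h⟩

theorem Cl_list {DS : DeductionSystem} {K : Set Term} {l : List Term}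
    (h : ∀ u ∈ l, u ∈ Cl DS K) : ∃ n, ∀ u ∈ l, u ∈ ClN DS K n := by
  induction l with
  | nil => exact ⟨0, by simp⟩
  | cons a l ih =>
    obtain ⟨n, hn⟩ := ih (fun u hu => h u (by simp [hu]))
    obtain ⟨m, hm⟩ := h a (by simp)
    refine ⟨max n m, fun u hu => ?_⟩
    rcases List.mem_cons.1 hu with rfl | hu
    · exact ClN_mono (le_max_right _ _) hm
    · exact ClN_mono (le_max_left _ _) (hn u hu)

theorem Dr_intro {DS : DeductionSystem} {K : Set Term} {p : List Term × Term}
    (hp : p ∈ AllR DS) (τ : Subst) (h : ∀ q ∈ p.1, q.subst τ ∈ Cl DS K) :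
    p.2.subst τ ∈ Dr DS K := by
  obtain ⟨n, hn⟩ := Cl_list (l := p.1.map (Term.subst τ)) (K := K) (DS := DS) (by
    intro u hu
    obtain ⟨q, hq, rfl⟩ := List.mem_map.1 hu
    exact h q hq)
  exact ⟨n, p, hp, τ, rfl, fun q hq => hn _ (List.mem_map_of_mem hq)⟩

theorem Dr_sub_Cl {DS : DeductionSystem} {K : Set Term} : Dr DS K ⊆ Cl DS K :=
  fun _ ⟨n, hn⟩ => ⟨n + 1, .inr hn⟩

theorem Cl_base {DS : DeductionSystem} {K : Set Term} {t : Term} (h : t ∈ K) (hg : t.Ground) :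
    t ∈ Cl DS K := ⟨0, h, hg⟩

theorem Dr_nonce {DS : DeductionSystem} {K : Set Term} (n : ℕ) : Term.nonce n ∈ Dr DS K := by
  have := Dr_intro (DS := DS) (K := K) (p := ([], Term.nonce n)) (.inr ⟨n, rfl⟩) Term.var (by simp)
  simpa [subst_nonce] using this

theorem ClN_le_of {DS : DeductionSystem} {K L : Set Term}
    (h : ∀ t ∈ K, t.Ground → t ∈ Cl DS L) (n : ℕ) : ClN DS K n ⊆ Cl DS L := by
  induction n with
  | zero => exact fun t ht => h t ht.1 ht.2
  | succ n ih =>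
    intro t ht
    rcases ClN_succ_iff.1 ht with ht | ⟨p, hp, τ, rfl, hq⟩
    · exact ih ht
    · exact Dr_sub_Cl (Dr_intro hp τ (fun q h => ih (hq q h)))

theorem Dr_le_of {DS : DeductionSystem} {K L : Set Term}
    (h : ∀ t ∈ K, t.Ground → t ∈ Cl DS L) : Dr DS K ⊆ Dr DS L := by
  rintro t ⟨n, p, hp, τ, rfl, hq⟩
  exact Dr_intro hp τ (fun q h' => ClN_le_of h n (hq q h'))

theorem Cl_mono {DS : DeductionSystem} {K L : Set Term} (h : K ⊆ L) : Cl DS K ⊆ Cl DS L :=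
  fun _ ⟨n, hn⟩ => ClN_le_of (fun _ ht hg => Cl_base (h ht) hg) n hn

theorem Dr_mono {DS : DeductionSystem} {K L : Set Term} (h : K ⊆ L) : Dr DS K ⊆ Dr DS L :=
  Dr_le_of (fun _ ht hg => Cl_base (h ht) hg)

theorem inst_ground {DS : DeductionSystem} {p : List Term × Term} (hp : p ∈ AllR DS) {τ : Subst}
    (h : ∀ q ∈ p.1, (q.subst τ).Ground) : (p.2.subst τ).Ground := by
  rcases hp with hp | ⟨n, rfl⟩
  · rw [ground_subst_iff]
    intro x hx
    obtain ⟨q, hq, hxq⟩ := DS.wf p hp hx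
    exact ground_subst_iff.1 (h q hq) x hxq
  · rw [ground_subst_iff]
    intro x hx
    rw [isSubterm_nonce_iff] at hx
    cases hx

theorem ClN_ground {DS : DeductionSystem} {K : Set Term} {n : ℕ} {t : Term}
    (h : t ∈ ClN DS K n) : t.Ground := by
  induction n generalizing t with
  | zero => exact h.2
  | succ n ih =>
    rcases ClN_succ_iff.1 h with h | ⟨p, hp, τ, rfl, hq⟩
    · exact ih h
    · exact inst_ground hp (fun q h' => ih (hq q h'))

/-- A derivation from `K`. -/
def DerFrom (DS : DeductionSystem) (K : Set Term) (D : List Step) : Prop :=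
  IsDerivation DS D ∧ ∀ (j : ℕ) (u : Term), D[j]? = some (Step.recv u) → u ∈ K

theorem RHSset_iff {D : List Step} {t : Term} :
    t ∈ RHSset D D.length ↔ ∃ s ∈ D, s.rhs = t := by
  constructor
  · rintro ⟨j, _, s, h1, h2⟩
    exact ⟨s, List.mem_of_getElem? h1, h2⟩
  · rintro ⟨s, h1, h2⟩
    obtain ⟨j, hj, rfl⟩ := List.mem_iff_getElem.1 h1
    exact ⟨j, hj, _, List.getElem?_eq_getElem hj, h2⟩

theorem DerFrom_append {DS : DeductionSystem} {K : Set Term} {D E : List Step}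
    (hD : DerFrom DS K D) (hE : DerFrom DS K E) : DerFrom DS K (D ++ E) := by
  refine ⟨⟨?_, ?_⟩, ?_⟩
  · intro s hs
    rcases List.mem_append.1 hs with h | h
    · exact hD.1.1 s h
    · exact hE.1.1 s h
  · intro i l r h u hu
    by_cases hi : i < D.length
    · rw [List.getElem?_append_left hi] at h
      obtain ⟨j, hj, s, h1, h2⟩ := hD.1.2 i l r h u hu
      exact ⟨j, hj, s, by rw [List.getElem?_append_left (by omega)]; exact h1, h2⟩
    · rw [List.getElem?_append_right (by omega)] at h
      obtain ⟨j, hj, s, h1, h2⟩ := hE.1.2 _ l r h u hu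
      refine ⟨D.length + j, by omega, s, ?_, h2⟩
      rw [List.getElem?_append_right (by omega)]
      simpa using h1
  · intro j u h
    by_cases hi : j < D.length
    · rw [List.getElem?_append_left hi] at h
      exact hD.2 _ _ h
    · rw [List.getElem?_append_right (by omega)] at h
      exact hE.2 _ _ h

theorem DerFrom_snoc {DS : DeductionSystem} {K : Set Term} {D : List Step} {l : List Term}
    {r : Term} (hD : DerFrom DS K D) (hd : IsDeduction DS (.std l r))
    (hl : ∀ u ∈ l, u ∈ RHSset D D.length) : DerFrom DS K (D ++ [.std l r]) := by
  refine ⟨⟨?_, ?_⟩, ?_⟩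
  · intro s hs
    rcases List.mem_append.1 hs with h | h
    · exact hD.1.1 s h
    · rw [List.mem_singleton.1 h]; exact hd
  · intro i l' r' h u hu
    have key : ∃ j < i, j < D.length ∧ ∃ s, D[j]? = some s ∧ s.rhs = u := by
      by_cases hi : i < D.length
      · rw [List.getElem?_append_left hi] at h
        obtain ⟨j, hj, s, h1, h2⟩ := hD.1.2 i l' r' h u hu
        exact ⟨j, hj, by omega, s, h1, h2⟩
      · rw [List.getElem?_append_right (by omega), List.getElem?_singleton] at h
        split_ifs at h
        simp only [Option.some.injEq, Step.std.injEq] at h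
        obtain ⟨rfl, rfl⟩ := h
        obtain ⟨j, hj, s, h1, h2⟩ := hl u hu
        exact ⟨j, by omega, hj, s, h1, h2⟩
    obtain ⟨j, hj, hj2, s, h1, h2⟩ := key
    exact ⟨j, hj, s, by rw [List.getElem?_append_left hj2]; exact h1, h2⟩
  · intro j u h
    by_cases hi : j < D.length
    · rw [List.getElem?_append_left hi] at h
      exact hD.2 _ _ h
    · rw [List.getElem?_append_right (by omega), List.getElem?_singleton] at h
      split_ifs at h
      simp at h

theorem DerFrom_list {DS : DeductionSystem} {K : Set Term} {l : List Term}
    (h : ∀ u ∈ l, ∃ D, DerFrom DS K D ∧ ∃ s ∈ D, s.rhs = u) :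
    ∃ D, DerFrom DS K D ∧ ∀ u ∈ l, ∃ s ∈ D, s.rhs = u := by
  induction l with
  | nil => exact ⟨[], ⟨⟨by simp, by simp⟩, by simp⟩, by simp⟩
  | cons a l ih =>
    obtain ⟨D, hD, hl⟩ := ih (fun u hu => h u (by simp [hu]))
    obtain ⟨E, hE, s, hs, hsa⟩ := h a (by simp)
    refine ⟨D ++ E, DerFrom_append hD hE, fun u hu => ?_⟩
    rcases List.mem_cons.1 hu with rfl | hu
    · exact ⟨s, by simp [hs], hsa⟩
    · obtain ⟨s, hs, h⟩ := hl u hu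
      exact ⟨s, by simp [hs], h⟩

theorem isDeduction_of {DS : DeductionSystem} {p : List Term × Term} (hp : p ∈ AllR DS)
    {τ : Subst} (h : ∀ q ∈ p.1, (q.subst τ).Ground) :
    IsDeduction DS (.std (p.1.map (Term.subst τ)) (p.2.subst τ)) := by
  refine ⟨?_, inst_ground hp h, ?_⟩
  · intro u hu
    obtain ⟨q, hq, rfl⟩ := List.mem_map.1 hu
    exact h q hq
  · rcases hp with hp | ⟨n, rfl⟩
    · exact .inr ⟨p, hp, τ, rfl, rfl⟩
    · exact .inl ⟨rfl, n, subst_nonce _ _⟩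

theorem DerFrom_of_inst {DS : DeductionSystem} {K : Set Term} {p : List Term × Term}
    (hp : p ∈ AllR DS) {τ : Subst}
    (h : ∀ q ∈ p.1, (q.subst τ).Ground ∧ ∃ D, DerFrom DS K D ∧ ∃ s ∈ D, s.rhs = q.subst τ) :
    ∃ D, DerFrom DS K (D ++ [.std (p.1.map (Term.subst τ)) (p.2.subst τ)]) := by
  obtain ⟨D, hD, hl⟩ := DerFrom_list (DS := DS) (K := K) (l := p.1.map (Term.subst τ)) (by
    intro u hu
    obtain ⟨q, hq, rfl⟩ := List.mem_map.1 hu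
    exact (h q hq).2)
  exact ⟨D, DerFrom_snoc hD (isDeduction_of hp (fun q hq => (h q hq).1))
    (fun u hu => RHSset_iff.2 (hl u hu))⟩

theorem DerFrom_of_ClN {DS : DeductionSystem} {K : Set Term} {n : ℕ} {t : Term}
    (h : t ∈ ClN DS K n) : ∃ D, DerFrom DS K D ∧ ∃ s ∈ D, s.rhs = t := by
  induction n generalizing t with
  | zero =>
    refine ⟨[.recv t], ⟨⟨?_, ?_⟩, ?_⟩, .recv t, by simp, rfl⟩
    · intro s hs
      rw [List.mem_singleton.1 hs]; exact h.2
    · intro i l r h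
      rw [List.getElem?_singleton] at h
      split_ifs at h
      simp at h
    · intro i u h'
      rw [List.getElem?_singleton] at h'
      split_ifs at h'
      simp at h'
      exact h' ▸ h.1
  | succ n ih =>
    rcases ClN_succ_iff.1 h with h | ⟨p, hp, τ, rfl, hq⟩
    · exact ih h
    · obtain ⟨D, hD⟩ := DerFrom_of_inst (K := K) hp (τ := τ)
        (fun q h' => ⟨ClN_ground (hq q h'), ih (hq q h')⟩)
      exact ⟨_, hD, _, by simp; exact .inr rfl, rfl⟩

theorem RHSset_sub_ClN {DS : DeductionSystem} {K : Set Term} {D : List Step}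
    (hD : DerFrom DS K D) (i : ℕ) : RHSset D i ⊆ ClN DS K i := by
  induction i using Nat.strong_induction_on with
  | _ i ih =>
    rintro t ⟨j, hj, s, h1, rfl⟩
    apply ClN_mono (Nat.succ_le_of_lt hj)
    have hd := hD.1.1 s (List.mem_of_getElem? h1)
    cases s with
    | recv u => exact ClN_mono (Nat.zero_le _) ⟨hD.2 j u h1, hd⟩
    | std l r =>
      have hl := hD.1.2 j l r h1
      right
      rcases hd.2.2 with ⟨rfl, n, rfl⟩ | ⟨p, hp, τ, rfl, rfl⟩
      · exact ⟨([], .nonce n), .inr ⟨n, rfl⟩, Term.var, (subst_nonce _ _).symm, by simp⟩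
      · exact ⟨p, .inl hp, τ, rfl, fun q hq => ih j hj (hl _ (List.mem_map_of_mem hq))⟩

theorem Der_eq_Dr (DS : DeductionSystem) (K : Set Term) : Der DS K = Dr DS K := by
  ext t
  constructor
  · rintro ⟨D, h1, h2, l, h3⟩
    have hD : DerFrom DS K D := ⟨h1, h2⟩
    have h4 : D[D.length - 1]? = some (.std l t) := by
      rw [← h3, List.getLast?_eq_getElem?]
    have hd := hD.1.1 _ (List.mem_of_getElem? h4)
    have hl := hD.1.2 _ l t h4
    rcases hd.2.2 with ⟨rfl, n, rfl⟩ | ⟨p, hp, τ, rfl, rfl⟩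
    · exact Dr_nonce n
    · exact ⟨_, p, .inl hp, τ, rfl,
        fun q hq => RHSset_sub_ClN hD _ (hl _ (List.mem_map_of_mem hq))⟩
  · rintro ⟨n, p, hp, τ, rfl, hq⟩
    obtain ⟨D, hD⟩ := DerFrom_of_inst (K := K) hp (τ := τ)
        (fun q h' => ⟨ClN_ground (hq q h'), DerFrom_of_ClN (hq q h')⟩)
    exact ⟨_, hD.1, hD.2, _, by simp; rfl⟩

/-- Shape of the rules of a subterm system. -/
theorem AllR_cases {DS : DeductionSystem} (hsub : SubtermSystem DS) {p : List Term × Term}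
    (hp : p ∈ AllR DS) : (∃ n, p = ([], Term.nonce n)) ∨
      (∃ (f : ℕ) (xs : List ℕ), p = (xs.map Term.var, Term.func f (xs.map Term.var))) ∨
      ∃ l ∈ p.1, Term.IsSubterm p.2 l := by
  rcases hp with hp | hp
  · rcases hsub p hp with ⟨f, xs, _, h1, h2⟩ | ⟨l, h1, h2⟩
    · exact .inr (.inl ⟨f, xs, Prod.ext h1 h2⟩)
    · exact .inr (.inr ⟨l, h1, h2⟩)
  · exact .inl hp

/-- Subterms of known terms. -/
theorem ClN_sub {DS : DeductionSystem} (hsub : SubtermSystem DS) {K : Set Term} {m : ℕ}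
    {w u : Term} (hw : w ∈ ClN DS K m) (hu : Term.IsSubterm u w) :
    u ∈ subT K ∨ ∃ m' < m, u ∈ DrN DS K m' := by
  induction m generalizing w with
  | zero => exact .inl ⟨w, hw.1, hu⟩
  | succ m ih =>
    have ih' : ∀ w, w ∈ ClN DS K m → Term.IsSubterm u w →
        u ∈ subT K ∨ ∃ m' < m + 1, u ∈ DrN DS K m' := by
      intro w hw hu
      rcases ih hw hu with h | ⟨m', h1, h2⟩
      · exact .inl h
      · exact .inr ⟨m', by omega, h2⟩
    rcases ClN_succ_iff.1 hw with hw | hw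
    · exact ih' _ hw hu
    · have hw0 := hw
      obtain ⟨p, hp, τ, rfl, hq⟩ := hw
      rcases AllR_cases hsub hp with ⟨n, rfl⟩ | ⟨f, xs, rfl⟩ | ⟨l, hl, hpl⟩
      · simp only [subst_nonce] at hu hw0
        rw [isSubterm_nonce_iff] at hu
        subst hu
        exact .inr ⟨m, by omega, hw0⟩
      · simp only [subst_func] at hu hw0
        rw [isSubterm_func_iff] at hu
        rcases hu with rfl | ⟨a, ha, hu⟩
        · exact .inr ⟨m, by omega, hw0⟩
        · obtain ⟨b, hb, rfl⟩ := List.mem_map.1 ha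
          exact ih' _ (hq b hb) hu
      · exact ih' _ (hq l hl) (IsSubterm.trans' hu (isSubterm_subst τ hpl))

/-! ### The construction -/

instance : Nonempty Term := ⟨.cst 0⟩

/-- Knowledge produced by the first `i` constraints. -/
def Kn (S : CSystem) (σ : Subst) (i : ℕ) : Set Term :=
  {u | ∃ j < i, ∃ t, S[j]? = some (Constraint.send t) ∧ u = t.subst σ}

theorem knowledge_eq (S : CSystem) (σ : Subst) (i : ℕ) : knowledge S σ i = Kn S σ (i + 1) := by
  ext u; simp [knowledge, Kn, Nat.lt_succ_iff]

theorem Kn_mono {S : CSystem} {σ : Subst} {i j : ℕ} (h : i ≤ j) : Kn S σ i ⊆ Kn S σ j := by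
  rintro u ⟨k, hk, h'⟩
  exact ⟨k, by omega, h'⟩

/-- Instances of the non-variable subterms of `S`. -/
def NN (S : CSystem) (σ : Subst) : Set Term :=
  {u | ∃ t ∈ csSub S, ¬ t.IsVar ∧ u = t.subst σ}

/-- Eventually derivable terms. -/
def Dble (DS : DeductionSystem) (S : CSystem) (σ : Subst) (s : Term) : Prop :=
  ∃ j, s ∈ Dr DS (Kn S σ j)

theorem mem_csTerms {S : CSystem} {i : ℕ} {c : Constraint} (h : S[i]? = some c) :
    c.term ∈ csTerms S := ⟨c, List.mem_of_getElem? h, rfl⟩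

theorem csSub_sub {S : CSystem} {t u : Term} (ht : t ∈ csSub S) (h : Term.IsSubterm u t) :
    u ∈ csSub S := by
  obtain ⟨w, hw, hw'⟩ := ht
  exact ⟨w, hw, IsSubterm.trans' h hw'⟩

theorem csTerms_sub {S : CSystem} {t : Term} (ht : t ∈ csTerms S) : t ∈ csSub S :=
  ⟨t, ht, .refl _⟩

theorem subst_csSub_ground {DS : DeductionSystem} {S : CSystem} {σ : Subst}
    (hsol : IsSolution DS S σ) {t : Term} (ht : t ∈ csSub S) : (t.subst σ).Ground := by
  rw [ground_subst_iff]
  intro x hx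
  apply hsol.ground
  rw [hsol.dom_eq]
  exact csSub_sub ht hx

theorem Kn_ground {DS : DeductionSystem} {S : CSystem} {σ : Subst}
    (hsol : IsSolution DS S σ) {i : ℕ} {t : Term} (ht : t ∈ Kn S σ i) : t.Ground := by
  obtain ⟨j, _, t, h, rfl⟩ := ht
  exact subst_csSub_ground hsol (csTerms_sub (mem_csTerms h))

theorem sub_Kn {DS : DeductionSystem} (hsub : SubtermSystem DS) {S : CSystem} {σ : Subst}
    (hS : IsCS S) (hsol : IsSolution DS S σ) (j : ℕ) {v : Term} (hv : v ∈ subT (Kn S σ j)) :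
    v ∈ NN S σ ∨ ∃ j' < j, v ∈ Dr DS (Kn S σ j') := by
  induction j using Nat.strong_induction_on with
  | _ j ih =>
    obtain ⟨w, ⟨k, hk, t, ht, rfl⟩, hv⟩ := hv
    rcases isSubterm_of_subst hv with ⟨q, h1, h2, h3⟩ | ⟨x, h1, h2⟩
    · exact .inl ⟨q, csSub_sub (csTerms_sub (mem_csTerms ht)) h1, h2, h3⟩
    · obtain ⟨i, hi, r, hr, hxr⟩ := hS.1 k t ht h1
      have := hsol.recv_mem i r hr
      rw [Der_eq_Dr, knowledge_eq] at this
      obtain ⟨n, hn⟩ := Dr_sub_Cl this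
      have h3 : Term.IsSubterm v (r.subst σ) := by
        apply IsSubterm.trans' h2
        simpa [subst_var] using isSubterm_subst σ hxr
      rcases ClN_sub hsub hn h3 with h | ⟨m', _, h⟩
      · rcases ih (i + 1) (by omega) h with h | ⟨j', hj', h⟩
        · exact .inl h
        · exact .inr ⟨j', by omega, h⟩
      · exact .inr ⟨i + 1, by omega, m', h⟩

theorem sub_Cl {DS : DeductionSystem} (hsub : SubtermSystem DS) {S : CSystem} {σ : Subst}
    (hS : IsCS S) (hsol : IsSolution DS S σ) {j : ℕ} {v w : Term} (hw : w ∈ Cl DS (Kn S σ j))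
    (hv : Term.IsSubterm v w) : v ∈ NN S σ ∨ Dble DS S σ v := by
  obtain ⟨n, hn⟩ := hw
  rcases ClN_sub hsub hn hv with h | ⟨m, _, h⟩
  · rcases sub_Kn hsub hS hsol j h with h | ⟨j', _, h⟩
    · exact .inl h
    · exact .inr ⟨j', h⟩
  · exact .inr ⟨j, m, h⟩

/-- Specification of the minimal rule instance deriving `s`. -/
def MinSpec (DS : DeductionSystem) (S : CSystem) (σ : Subst) (s : Term) (j m : ℕ)
    (p : List Term × Term) (τ : Subst) : Prop :=
  p ∈ AllR DS ∧ s = p.2.subst τ ∧ (∀ q ∈ p.1, q.subst τ ∈ ClN DS (Kn S σ j) m) ∧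
    ∀ j' m', s ∈ DrN DS (Kn S σ j') m' → j < j' ∨ (j = j' ∧ m ≤ m')

theorem exists_min {DS : DeductionSystem} {S : CSystem} {σ : Subst} {s : Term}
    (h : Dble DS S σ s) : ∃ j m p τ, MinSpec DS S σ s j m p τ := by
  classical
  have h2 := Nat.find_spec h
  obtain ⟨p, hp, τ, h3, h4⟩ := Nat.find_spec h2
  refine ⟨Nat.find h, Nat.find h2, p, τ, hp, h3, h4, fun j' m' h' => ?_⟩
  have h5 : Nat.find h ≤ j' := Nat.find_min' h ⟨m', h'⟩
  rcases h5.lt_or_eq with h6 | h6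
  · exact .inl h6
  · refine .inr ⟨h6, Nat.find_min' h2 ?_⟩
    rw [h6]; exact h'

/-- Preserved patterns. -/
def PP (DS : DeductionSystem) (S : CSystem) (σ : Subst) (P : Term → List Term × Term)
    (τ : Term → Subst) (q : Term) (θ : Subst) : Prop :=
  (q ∈ csSub S ∧ θ = σ) ∨ ∃ s ∈ NN S σ, Dble DS S σ s ∧
    (∃ r, (r ∈ (P s).1 ∨ r = (P s).2) ∧ Term.IsSubterm q r) ∧ θ = τ s

/-- Preserved ground terms. -/
def N1 (DS : DeductionSystem) (S : CSystem) (σ : Subst) (P : Term → List Term × Term)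
    (τ : Term → Subst) : Set Term :=
  {u | ∃ q θ, PP DS S σ P τ q θ ∧ ¬ q.IsVar ∧ u = q.subst θ}

/-- All relevant ground terms. -/
def N2 (DS : DeductionSystem) (S : CSystem) (σ : Subst) (P : Term → List Term × Term)
    (τ : Term → Subst) : Set Term :=
  {u | ∃ q θ, PP DS S σ P τ q θ ∧ u = q.subst θ}

/-- All subterms of rules. -/
def ruleSub (DS : DeductionSystem) : Set Term :=
  subT {r | ∃ p ∈ DS.rules, r ∈ p.1 ∨ r = p.2}

theorem ruleSub_finite (DS : DeductionSystem) : (ruleSub DS).Finite := by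
  apply subT_finite
  have : {r | ∃ p ∈ DS.rules, r ∈ p.1 ∨ r = p.2} =
      ⋃ p ∈ DS.rules, ({r | r ∈ p.1} ∪ {p.2}) := by
    ext r; simp [or_comm]
  rw [this]
  exact DS.finite.biUnion (fun p _ => (List.finite_toSet p.1).union (Set.finite_singleton _))

theorem csSub_finite (S : CSystem) : (csSub S).Finite := by
  apply subT_finite
  have : csTerms S = Constraint.term '' {c | c ∈ S} := by
    ext t; simp [csTerms]
  rw [this]
  exact (List.finite_toSet S).image _

theorem N2_sub {DS : DeductionSystem} {S : CSystem} {σ : Subst} {J M : Term → ℕ}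
    {P : Term → List Term × Term} {τ : Term → Subst}
    (h : ∀ s, Dble DS S σ s → MinSpec DS S σ s (J s) (M s) (P s) (τ s)) :
    N2 DS S σ P τ ⊆ (Term.subst σ '' csSub S) ∪
      ((fun x : Term × Term => x.2.subst (τ (x.1.subst σ))) '' (csSub S ×ˢ ruleSub DS)) := by
  rintro u ⟨q, θ, (⟨hq, rfl⟩ | ⟨s, hs, hd, ⟨r, hr, hqr⟩, rfl⟩), rfl⟩
  · exact .inl ⟨q, hq, rfl⟩
  · obtain ⟨t, ht, _, rfl⟩ := hs
    obtain ⟨h1, h2, _⟩ := h _ hd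
    rcases h1 with h1 | ⟨n, h1⟩
    · exact .inr ⟨(t, q), ⟨ht, r, ⟨_, h1, hr⟩, hqr⟩, rfl⟩
    · rw [h1] at hr
      simp only [List.not_mem_nil, false_or] at hr
      subst hr
      rw [isSubterm_nonce_iff] at hqr
      subst hqr
      refine .inl ⟨t, ht, ?_⟩
      conv_lhs => rw [h2, h1]

theorem N2_finite {DS : DeductionSystem} {S : CSystem} {σ : Subst} {J M : Term → ℕ}
    {P : Term → List Term × Term} {τ : Term → Subst}
    (h : ∀ s, Dble DS S σ s → MinSpec DS S σ s (J s) (M s) (P s) (τ s)) :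
    (N2 DS S σ P τ).Finite :=
  (((csSub_finite S).image _).union
    (((csSub_finite S).prod (ruleSub_finite DS)).image _)).subset (N2_sub h)

theorem N2_card {DS : DeductionSystem} {S : CSystem} {σ : Subst} {J M : Term → ℕ}
    {P : Term → List Term × Term} {τ : Term → Subst}
    (h : ∀ s, Dble DS S σ s → MinSpec DS S σ s (J s) (M s) (P s) (τ s)) :
    (N2 DS S σ P τ).ncard ≤ (csSub S).ncard + (csSub S).ncard * (ruleSub DS).ncard := by
  refine (Set.ncard_le_ncard (N2_sub h) (((csSub_finite S).image _).union
    (((csSub_finite S).prod (ruleSub_finite DS)).image _))).trans ?_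
  refine (Set.ncard_union_le _ _).trans ?_
  refine Nat.add_le_add (Set.ncard_image_le (csSub_finite S)) ?_
  refine (Set.ncard_image_le ((csSub_finite S).prod (ruleSub_finite DS))).trans ?_
  rw [Set.ncard_prod]

/-- The data used in the construction of the small solution. -/
structure Env (DS : DeductionSystem) (S : CSystem) (σ : Subst) where
  hsub : SubtermSystem DS
  hS : IsCS S
  hsol : IsSolution DS S σ
  f : ℕ
  x₁ : ℕ
  x₂ : ℕ
  hne : x₁ ≠ x₂
  hrule : ([Term.var x₁, Term.var x₂], Term.func f [Term.var x₁, Term.var x₂]) ∈ DS.rules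
  hfree : ∀ p ∈ DS.rules, OccursInRule f p →
      p = ([Term.var x₁, Term.var x₂], Term.func f [Term.var x₁, Term.var x₂])
  J : Term → ℕ
  M : Term → ℕ
  P : Term → List Term × Term
  τ : Term → Subst
  hmin : ∀ s, Dble DS S σ s → MinSpec DS S σ s (J s) (M s) (P s) (τ s)
  b : ℕ
  hb : ∀ n, Term.nonce n ∈ N2 DS S σ P τ → n < b

theorem exists_env {DS : DeductionSystem} {S : CSystem} {σ : Subst} (hsub : SubtermSystem DS)
    (hf : FreePairing DS) (hS : IsCS S) (hsol : IsSolution DS S σ) : Nonempty (Env DS S σ) := by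
  obtain ⟨f, x₁, x₂, hne, hrule, hfree⟩ := hf
  have := fun s (h : Dble DS S σ s) => exists_min h
  choose! J M P τ hmin using this
  have hfin := N2_finite hmin
  have hfin2 : {n | Term.nonce n ∈ N2 DS S σ P τ}.Finite :=
    hfin.preimage (fun a _ b _ h => by simpa using h)
  obtain ⟨b, hb⟩ := hfin2.bddAbove
  exact ⟨⟨hsub, hS, hsol, f, x₁, x₂, hne, hrule, hfree, J, M, P, τ, hmin, b + 1,
    fun n hn => Nat.lt_succ_of_le (hb hn)⟩⟩

/-- Instance of the term sent at position `k`. -/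
noncomputable def sndT (S : CSystem) (σ : Subst) (k : ℕ) : Term :=
  match S[k]? with
  | some (Constraint.send t) => t.subst σ
  | _ => .nonce 0

theorem sndT_eq {S : CSystem} {σ : Subst} {k : ℕ} {t : Term}
    (h : S[k]? = some (Constraint.send t)) : sndT S σ k = t.subst σ := by
  simp [sndT, h]

namespace Env

variable {DS : DeductionSystem} {S : CSystem} {σ : Subst}

/-- Terms which get replaced. -/
def Free (e : Env DS S σ) (v : Term) : Prop := Dble DS S σ v ∧ v ∉ N1 DS S σ e.P e.τ

/-- Fresh nonce for `v`. -/
noncomputable def nn (e : Env DS S σ) (v : Term) : ℕ := v.code + e.b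

open Classical in
/-- Images of the sent terms. -/
noncomputable def E (e : Env DS S σ) : ℕ → Term
  | 0 => .nonce 0
  | k + 1 => (sndT S σ k).rep (fun v => if e.Free v then
      (if h : e.J v < k + 1 then some (.func e.f [.nonce (e.nn v), E e (e.J v)]) else none)
      else none)

/-- Replacement of a free term. -/
noncomputable def φ (e : Env DS S σ) (v : Term) : Term := .func e.f [.nonce (e.nn v), e.E (e.J v)]

open Classical in
/-- Replacement rule. -/
noncomputable def A (e : Env DS S σ) (v : Term) : Option Term :=
  if e.Free v then some (e.φ v) else none

/-- The replacement. -/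
noncomputable def δ (e : Env DS S σ) (v : Term) : Term := v.rep e.A

open Classical in
/-- Inverse replacement rule. -/
noncomputable def A' (e : Env DS S σ) (w : Term) : Option Term :=
  if h : ∃ u, e.Free u ∧ e.φ u = w then some h.choose else none

/-- The inverse replacement. -/
noncomputable def ψ (e : Env DS S σ) (v : Term) : Term := v.rep e.A'

theorem A_free (e : Env DS S σ) {v : Term} (h : e.Free v) : e.A v = some (e.φ v) := by
  simp [A, h]

theorem A_not (e : Env DS S σ) {v : Term} (h : ¬ e.Free v) : e.A v = none := by
  simp [A, h]

theorem δ_free (e : Env DS S σ) {v : Term} (h : e.Free v) : e.δ v = e.φ v :=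
  rep_some (e.A_free h)

theorem φ_inj (e : Env DS S σ) {u v : Term} (h : e.φ u = e.φ v) : u = v := by
  simp only [φ, Term.func.injEq, List.cons.injEq, Term.nonce.injEq, nn, true_and] at h
  exact code_inj _ _ (by omega)

theorem A'_φ (e : Env DS S σ) {u : Term} (h : e.Free u) : e.A' (e.φ u) = some u := by
  have h' : ∃ v, e.Free v ∧ e.φ v = e.φ u := ⟨u, h, rfl⟩
  rw [A', dif_pos h']
  exact congrArg some (e.φ_inj h'.choose_spec.2)

theorem A'_some (e : Env DS S σ) {u w : Term} (h : e.A' w = some u) : e.Free u ∧ e.φ u = w := by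
  rw [A'] at h
  split_ifs at h with h'
  have := h'.choose_spec
  rw [Option.some.inj h] at this
  exact this

theorem A'_none (e : Env DS S σ) {w : Term} (h : ∀ u, e.Free u → e.φ u ≠ w) : e.A' w = none := by
  rw [A', dif_neg]
  rintro ⟨u, h1, h2⟩
  exact h u h1 h2

theorem J_le (e : Env DS S σ) {v : Term} {j : ℕ} (h : v ∈ Dr DS (Kn S σ j)) : e.J v ≤ j := by
  obtain ⟨m, hm⟩ := h
  rcases (e.hmin v ⟨j, m, hm⟩).2.2.2 j m hm with h | h <;> omega

theorem mem_J (e : Env DS S σ) {v : Term} (h : Dble DS S σ v) : v ∈ Dr DS (Kn S σ (e.J v)) := by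
  obtain ⟨h1, h2, h3, _⟩ := e.hmin v h
  exact ⟨e.M v, e.P v, h1, e.τ v, h2, h3⟩

theorem NN_sub (e : Env DS S σ) {v : Term} (h : v ∈ NN S σ) : v ∈ N1 DS S σ e.P e.τ := by
  obtain ⟨t, h1, h2, h3⟩ := h
  exact ⟨t, σ, .inl ⟨h1, rfl⟩, h2, h3⟩

theorem E_succ (e : Env DS S σ) {k : ℕ} {t : Term} (h : S[k]? = some (Constraint.send t)) :
    e.E (k + 1) = e.δ (t.subst σ) := by
  rw [E, sndT_eq h, δ]
  apply rep_congr
  intro u hu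
  by_cases hf : e.Free u
  · have hJ : e.J u < k + 1 := by
      rcases sub_Kn e.hsub e.hS e.hsol (k + 1)
        (v := u) ⟨_, ⟨k, by omega, t, h, rfl⟩, hu⟩ with h' | ⟨j', hj', h'⟩
      · exact absurd (e.NN_sub h') hf.2
      · have := e.J_le h'
        omega
    rw [e.A_free hf, if_pos hf, dif_pos hJ, φ]
  · rw [e.A_not hf, if_neg hf]

/-- At a positive first stage, an unknown term has just been sent. -/
theorem J_succ (e : Env DS S σ) {v : Term} (h : Dble DS S σ v) {k : ℕ} (hk : e.J v = k + 1) :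
    ∃ t, S[k]? = some (Constraint.send t) ∧ t.subst σ ∉ Cl DS (Kn S σ k) := by
  by_contra hc
  push Not at hc
  have h1 := e.mem_J h
  rw [hk] at h1
  have h2 : v ∈ Dr DS (Kn S σ k) := by
    refine Dr_le_of ?_ h1
    rintro w ⟨j, hj, t, ht, rfl⟩ hg
    by_cases hjk : j = k
    · subst hjk
      exact hc t ht
    · exact Cl_base ⟨j, by omega, t, ht, rfl⟩ hg
  have := e.J_le h2
  omega

theorem E_ground (e : Env DS S σ) (k : ℕ) : (e.E k).Ground := by
  have nonce_ground : ∀ n, (Term.nonce n).Ground := by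
    intro n; rw [ground_iff]; intro x hx; rw [isSubterm_nonce_iff] at hx; cases hx
  induction k using Nat.strong_induction_on with
  | _ k ih =>
    cases k with
    | zero => rw [E]; exact nonce_ground 0
    | succ k =>
      rw [E]
      apply rep_ground
      · intro v w hw
        split_ifs at hw with h1 h2
        rw [← Option.some.inj hw, ground_iff]
        intro x hx
        rw [isSubterm_func_iff] at hx
        rcases hx with hx | ⟨a, ha, hx⟩
        · cases hx
        · simp only [List.mem_cons, List.not_mem_nil, or_false] at ha
          rcases ha with rfl | rfl
          · exact ground_iff.1 (nonce_ground _) x hx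
          · exact ground_iff.1 (ih _ h2) x hx
      · unfold sndT
        split
        · rename_i t ht
          exact subst_csSub_ground e.hsol (csTerms_sub (mem_csTerms ht))
        · exact nonce_ground 0

theorem δ_ground (e : Env DS S σ) {t : Term} (h : t.Ground) : (e.δ t).Ground := by
  apply rep_ground _ h
  intro v w hw
  unfold A at hw
  split_ifs at hw with h1
  rw [← Option.some.inj hw, φ, ground_iff]
  intro x hx
  rw [isSubterm_func_iff] at hx
  rcases hx with hx | ⟨a, ha, hx⟩
  · cases hx
  · simp only [List.mem_cons, List.not_mem_nil, or_false] at ha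
    rcases ha with rfl | rfl
    · rw [isSubterm_nonce_iff] at hx; cases hx
    · exact ground_iff.1 (e.E_ground _) x hx

theorem PP_sub (e : Env DS S σ) {q q' : Term} {θ : Subst} (h : PP DS S σ e.P e.τ q θ)
    (h' : Term.IsSubterm q' q) : PP DS S σ e.P e.τ q' θ := by
  rcases h with ⟨h1, h2⟩ | ⟨s, hs, hd, ⟨r, hr, hqr⟩, h2⟩
  · exact .inl ⟨csSub_sub h1 h', h2⟩
  · exact .inr ⟨s, hs, hd, ⟨r, hr, IsSubterm.trans' h' hqr⟩, h2⟩

theorem δ_PP (e : Env DS S σ) {q : Term} {θ : Subst} (h : PP DS S σ e.P e.τ q θ) :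
    e.δ (q.subst θ) = q.subst (fun x => e.δ (θ x)) := by
  apply rep_subst
  intro q' h1 h2
  exact e.A_not (fun hf => hf.2 ⟨q', θ, e.PP_sub h h1, h2, rfl⟩)

/-- Images of knowledge. -/
def K' (e : Env DS S σ) (i : ℕ) : Set Term := e.δ '' Kn S σ i

theorem K'_mono (e : Env DS S σ) {i j : ℕ} (h : i ≤ j) : e.K' i ⊆ e.K' j :=
  Set.image_mono (Kn_mono h)

theorem pair_mem (e : Env DS S σ) {K : Set Term} {a b : Term} (ha : a ∈ Cl DS K)
    (hb : b ∈ Cl DS K) : Term.func e.f [a, b] ∈ Dr DS K := by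
  have := Dr_intro (DS := DS) (K := K) (.inl e.hrule) (fun x => if x = e.x₁ then a else b) (by
    intro q hq
    simp only [List.mem_cons, List.not_mem_nil, or_false] at hq
    rcases hq with rfl | rfl
    · simpa [subst_var] using ha
    · simpa [subst_var, e.hne.symm] using hb)
  simpa [subst_func, subst_var, e.hne.symm] using this

theorem comp_or (e : Env DS S σ) {v : Term} (h : Dble DS S σ v) (hN : v ∉ NN S σ) :
    (∃ n, e.P v = ([], Term.nonce n)) ∨
      (∃ (f : ℕ) (xs : List ℕ), e.P v = (xs.map Term.var, Term.func f (xs.map Term.var))) := by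
  obtain ⟨h1, h2, h3, h4⟩ := e.hmin v h
  rcases AllR_cases e.hsub h1 with h | h | ⟨l, hl, hs⟩
  · exact .inl h
  · exact .inr h
  · exfalso
    have h5 := isSubterm_subst (e.τ v) hs
    rw [← h2] at h5
    rcases ClN_sub e.hsub (h3 l hl) h5 with h | ⟨m', hm', h⟩
    · rcases sub_Kn e.hsub e.hS e.hsol _ h with h | ⟨j', hj', h⟩
      · exact hN h
      · have := e.J_le h
        omega
    · rcases h4 _ _ h with h | h <;> omega

theorem fwd_step (e : Env DS S σ) {v : Term} {j : ℕ} (h : Dble DS S σ v) (hj : e.J v ≤ j)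
    (hq : ∀ q ∈ (e.P v).1, e.δ (q.subst (e.τ v)) ∈ Cl DS (e.K' j)) : e.δ v ∈ Dr DS (e.K' j) := by
  by_cases hf : e.Free v
  · rw [e.δ_free hf, φ]
    refine e.pair_mem (Dr_sub_Cl (Dr_nonce _)) ?_
    cases hk : e.J v with
    | zero => rw [E]; exact Dr_sub_Cl (Dr_nonce _)
    | succ k =>
      obtain ⟨t, ht, _⟩ := e.J_succ h hk
      rw [e.E_succ ht]
      have : t.subst σ ∈ Kn S σ j := ⟨k, by omega, t, ht, rfl⟩
      exact Cl_base ⟨_, this, rfl⟩ (e.δ_ground (Kn_ground e.hsol this))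
  · obtain ⟨h1, h2, -, -⟩ := e.hmin v h
    by_cases hN : v ∈ NN S σ
    · have h3 : e.δ v = (e.P v).2.subst (fun x => e.δ (e.τ v x)) := by
        rw [← e.δ_PP (.inr ⟨v, hN, h, ⟨_, .inr rfl, .refl _⟩, rfl⟩), ← h2]
      rw [h3]
      apply Dr_intro h1
      intro q hq'
      rw [← e.δ_PP (.inr ⟨v, hN, h, ⟨q, .inl hq', .refl _⟩, rfl⟩)]
      exact hq q hq'
    · rcases e.comp_or h hN with ⟨n, hn⟩ | ⟨g, xs, hg⟩
      · rw [hn] at h2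
        rw [subst_nonce] at h2
        rw [δ]
        rw [h2] at hf ⊢
        rw [rep_nonce (e.A_not hf)]
        exact Dr_nonce n
      · have h3 : e.δ v = (e.P v).2.subst (fun x => e.δ (e.τ v x)) := by
          rw [hg] at h2 ⊢
          rw [subst_func] at h2 ⊢
          have : e.δ v = (Term.func g (((xs.map Term.var).map (Term.subst (e.τ v))).map e.δ)) := by
            conv_lhs => rw [h2]
            exact rep_func (e.A_not (h2 ▸ hf))
          rw [this]
          simp [subst_var]
        rw [h3]
        apply Dr_intro h1
        intro q hq'
        have h4 := hq q hq'
        rw [hg] at hq'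
        obtain ⟨x, _, rfl⟩ := List.mem_map.1 hq'
        simpa [subst_var] using h4

theorem fwd (e : Env DS S σ) (j : ℕ) : ∀ m, ∀ v ∈ ClN DS (Kn S σ j) m, e.δ v ∈ Cl DS (e.K' j) := by
  induction j using Nat.strong_induction_on with
  | _ j ihj =>
    intro m
    induction m using Nat.strong_induction_on with
    | _ m ihm =>
      intro v hv
      rcases ClN_cases hv with h | ⟨m', hm', h⟩
      · exact Cl_base ⟨v, h, rfl⟩ (e.δ_ground (Kn_ground e.hsol h))
      · have hd : Dble DS S σ v := ⟨j, m', h⟩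
        obtain ⟨-, -, h3, h4⟩ := e.hmin v hd
        apply Dr_sub_Cl
        apply e.fwd_step hd (e.J_le ⟨m', h⟩)
        intro q hq
        rcases h4 _ _ h with h | ⟨h5, h6⟩
        · exact Cl_mono (e.K'_mono h.le) (ihj _ h _ _ (h3 q hq))
        · exact ihm (e.M v) (by omega) _ (h5 ▸ h3 q hq)

theorem fwd_Dr (e : Env DS S σ) {j : ℕ} {v : Term} (h : v ∈ Dr DS (Kn S σ j)) :
    e.δ v ∈ Dr DS (e.K' j) := by
  have hd : Dble DS S σ v := ⟨j, h⟩
  apply e.fwd_step hd (e.J_le h)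
  intro q hq
  exact Cl_mono (e.K'_mono (e.J_le h)) (e.fwd _ _ _ ((e.hmin v hd).2.2.1 q hq))

theorem nonce_not_free (e : Env DS S σ) {u : Term} (h : ¬ e.Free (.nonce (e.nn u))) : False := by
  apply h
  refine ⟨⟨0, Dr_nonce _⟩, ?_⟩
  rintro ⟨q, θ, h1, _, h2⟩
  have := e.hb _ ⟨q, θ, h1, h2⟩
  simp only [nn] at this
  omega

theorem ψ_δ (e : Env DS S σ) (v : Term) : e.ψ (e.δ v) = v := by
  have key : ∀ v, e.Free v → e.ψ (e.δ v) = v := by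
    intro v hv
    rw [e.δ_free hv]
    exact rep_some (e.A'_φ hv)
  induction v using Term.ind' with
  | hv x =>
    by_cases hf : e.Free (.var x)
    · exact key _ hf
    · rw [δ, rep_var (e.A_not hf)]
      exact rep_var (e.A'_none (fun u _ h => by simp [φ] at h))
  | hc x =>
    by_cases hf : e.Free (.cst x)
    · exact key _ hf
    · rw [δ, rep_cst (e.A_not hf)]
      exact rep_cst (e.A'_none (fun u _ h => by simp [φ] at h))
  | hn x =>
    by_cases hf : e.Free (.nonce x)
    · exact key _ hf
    · rw [δ, rep_nonce (e.A_not hf)]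
      exact rep_nonce (e.A'_none (fun u _ h => by simp [φ] at h))
  | hf g args ih =>
    by_cases hf : e.Free (.func g args)
    · exact key _ hf
    · rw [δ, rep_func (e.A_not hf), ψ, rep_func]
      · congr 1
        rw [List.map_map]
        conv_rhs => rw [← List.map_id args]
        exact List.map_congr_left (fun a ha => ih a ha)
      · apply e.A'_none
        intro u hu h
        simp only [φ, Term.func.injEq] at h
        obtain ⟨_, h⟩ := h
        cases args with
        | nil => simp at h
        | cons a l =>
          simp only [List.map_cons, List.cons.injEq] at h
          obtain ⟨h, _⟩ := h
          by_cases hfa : e.Free a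
          · rw [rep_some (e.A_free hfa)] at h
            simp [φ] at h
          · cases a with
            | var x => rw [rep_var (e.A_not hfa)] at h; cases h
            | cst x => rw [rep_cst (e.A_not hfa)] at h; cases h
            | nonce x =>
              rw [rep_nonce (e.A_not hfa)] at h
              rw [← h] at hfa
              exact e.nonce_not_free hfa
            | func x l => rw [rep_func (e.A_not hfa)] at h; cases h

theorem bwd_step (e : Env DS S σ) {i : ℕ} {p : List Term × Term} (hp : p ∈ AllR DS) (θ : Subst)
    (hq : ∀ q ∈ p.1, e.ψ (q.subst θ) ∈ Cl DS (Kn S σ i)) :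
    e.ψ (p.2.subst θ) ∈ Dr DS (Kn S σ i) := by
  by_cases ho : OccursInRule e.f p
  · have hpp : p = ([Term.var e.x₁, Term.var e.x₂],
        Term.func e.f [Term.var e.x₁, Term.var e.x₂]) := by
      rcases hp with hp | ⟨n, rfl⟩
      · exact e.hfree p hp ho
      · rcases ho with ⟨t, ht, _⟩ | ⟨args, h⟩
        · simp at ht
        · rw [isSubterm_nonce_iff] at h; cases h
    subst hpp
    have h1 := hq (.var e.x₁) (by simp)
    have h2 := hq (.var e.x₂) (by simp)
    rw [subst_var] at h1 h2
    simp only [subst_func, List.map_cons, List.map_nil, subst_var]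
    cases hA : e.A' (.func e.f [θ e.x₁, θ e.x₂]) with
    | none =>
      rw [ψ, rep_func hA]
      exact e.pair_mem h1 h2
    | some u =>
      rw [ψ, rep_some hA]
      obtain ⟨hu, hφ⟩ := e.A'_some hA
      simp only [φ, Term.func.injEq, List.cons.injEq, true_and, and_true] at hφ
      have hJ : e.J u ≤ i := by
        cases hk : e.J u with
        | zero => omega
        | succ k =>
          by_contra hlt
          obtain ⟨t, ht, hnot⟩ := e.J_succ hu.1 hk
          rw [← hφ.2, hk, e.E_succ ht, e.ψ_δ] at h2
          exact hnot (Cl_mono (Kn_mono (by omega)) h2)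
      exact Dr_mono (Kn_mono hJ) (e.mem_J hu.1)
  · have key : ∀ r, (r ∈ p.1 ∨ r = p.2) →
        e.ψ (r.subst θ) = r.subst (fun x => e.ψ (θ x)) := by
      intro r hr
      apply rep_subst
      intro q hqr hqv
      apply e.A'_none
      intro u hu h
      cases q with
      | var x => simp [Term.IsVar] at hqv
      | cst x => rw [subst_cst] at h; cases h
      | nonce x => rw [subst_nonce] at h; cases h
      | func g args =>
        rw [subst_func] at h
        simp only [φ, Term.func.injEq] at h
        obtain ⟨rfl, _⟩ := h
        apply ho
        rcases hr with hr | rfl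
        · exact .inl ⟨r, hr, args, hqr⟩
        · exact .inr ⟨args, hqr⟩
    rw [key _ (.inr rfl)]
    apply Dr_intro hp
    intro q hq'
    rw [← key q (.inl hq')]
    exact hq q hq'

theorem bwd (e : Env DS S σ) {i n : ℕ} : ∀ w ∈ ClN DS (e.K' i) n, e.ψ w ∈ Cl DS (Kn S σ i) := by
  induction n with
  | zero =>
    rintro w ⟨⟨v, hv, rfl⟩, _⟩
    rw [e.ψ_δ]
    exact Cl_base hv (Kn_ground e.hsol hv)
  | succ n ih =>
    intro w hw
    rcases ClN_succ_iff.1 hw with hw | ⟨p, hp, θ, rfl, hq⟩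
    · exact ih w hw
    · exact Dr_sub_Cl (e.bwd_step hp θ (fun q h => ih _ (hq q h)))

theorem bwd_Dr (e : Env DS S σ) {i : ℕ} {w : Term} (hw : w ∈ Dr DS (e.K' i)) :
    e.ψ w ∈ Dr DS (Kn S σ i) := by
  obtain ⟨n, p, hp, θ, rfl, hq⟩ := hw
  exact e.bwd_step hp θ (fun q h => e.bwd _ (hq q h))

open Classical in
/-- The small solution. -/
noncomputable def σ' (e : Env DS S σ) : Subst := fun x =>
  if x ∈ csVars S then e.δ (σ x) else .var x

theorem σ'_subst (e : Env DS S σ) {t : Term} (h : t ∈ csSub S) :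
    t.subst e.σ' = e.δ (t.subst σ) := by
  rw [e.δ_PP (.inl ⟨h, rfl⟩)]
  apply subst_congr
  intro x hx
  have : x ∈ csVars S := csSub_sub h hx
  simp [σ', this]

theorem Kn_σ' (e : Env DS S σ) (i : ℕ) : Kn S e.σ' i = e.K' i := by
  ext u
  constructor
  · rintro ⟨j, hj, t, ht, rfl⟩
    exact ⟨_, ⟨j, hj, t, ht, rfl⟩, (e.σ'_subst (csTerms_sub (mem_csTerms ht))).symm⟩
  · rintro ⟨_, ⟨j, hj, t, ht, rfl⟩, rfl⟩
    exact ⟨j, hj, t, ht, (e.σ'_subst (csTerms_sub (mem_csTerms ht))).symm⟩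

theorem σ'_ground (e : Env DS S σ) {x : ℕ} (hx : x ∈ csVars S) : (e.σ' x).Ground := by
  simp only [σ', hx, if_true]
  apply e.δ_ground
  apply e.hsol.ground
  rw [e.hsol.dom_eq]; exact hx

theorem σ'_dom (e : Env DS S σ) : e.σ'.dom = csVars S := by
  ext x
  constructor
  · intro h
    by_contra hx
    exact h (by simp [σ', hx])
  · intro hx h
    have := e.σ'_ground hx
    rw [h] at this
    exact ground_iff.1 this x (.refl _)

theorem σ'_sol (e : Env DS S σ) : IsSolution DS S e.σ' where
  ground := by
    intro x hx
    rw [e.σ'_dom] at hx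
    exact e.σ'_ground hx
  idem := by
    intro x
    by_cases hx : x ∈ csVars S
    · exact subst_ground (e.σ'_ground hx)
    · have : e.σ' x = .var x := by simp [σ', hx]
      rw [this, subst_var, this]
  dom_eq := e.σ'_dom
  recv_mem := by
    intro i t ht
    have := e.hsol.recv_mem i t ht
    rw [Der_eq_Dr, knowledge_eq] at this ⊢
    rw [e.Kn_σ', e.σ'_subst (t := t) (csTerms_sub (mem_csTerms ht))]
    exact e.fwd_Dr this
  neg_not_mem := by
    intro i t ht h
    apply e.hsol.neg_not_mem i t ht
    rw [Der_eq_Dr, knowledge_eq] at h ⊢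
    rw [e.Kn_σ', e.σ'_subst (t := t) (csTerms_sub (mem_csTerms ht))] at h
    have := e.bwd_Dr h
    rwa [e.ψ_δ] at this

theorem var_recv (e : Env DS S σ) {x : ℕ} (hx : x ∈ csVars S) :
    ∃ (j : ℕ) (u : Term), S[j]? = some (Constraint.recv u) ∧ x ∈ u.varsSet := by
  obtain ⟨t, ⟨c, hc, rfl⟩, hx⟩ := hx
  obtain ⟨i, hi⟩ := List.mem_iff_getElem?.1 hc
  cases c with
  | recv t => exact ⟨i, t, hi, hx⟩
  | send t =>
    obtain ⟨j, _, u, h⟩ := e.hS.1 i t hi hx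
    exact ⟨j, u, h⟩
  | neg t => exact e.hS.2 i t hi hx

theorem N2_cases (e : Env DS S σ) {v : Term} (hv : v ∈ N2 DS S σ e.P e.τ) :
    v ∈ N1 DS S σ e.P e.τ ∨ Dble DS S σ v := by
  obtain ⟨q, θ, h, rfl⟩ := hv
  by_cases hq : q.IsVar
  · cases q with
    | var x =>
      rw [subst_var]
      rcases h with ⟨h1, rfl⟩ | ⟨s, hs, hd, ⟨r, hr, hqr⟩, rfl⟩
      · obtain ⟨j, u, hu, hxu⟩ := e.var_recv h1
        have := e.hsol.recv_mem j u hu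
        rw [Der_eq_Dr, knowledge_eq] at this
        have h3 := isSubterm_subst θ hxu
        rw [subst_var] at h3
        rcases sub_Cl e.hsub e.hS e.hsol (Dr_sub_Cl this) h3 with h | h
        · exact .inl (e.NN_sub h)
        · exact .inr h
      · obtain ⟨h1, h2, h3, -⟩ := e.hmin s hd
        have hex : ∃ r' ∈ (e.P s).1, Term.IsSubterm (.var x) r' := by
          rcases hr with hr | rfl
          · exact ⟨r, hr, hqr⟩
          · rcases h1 with h1 | ⟨n, h1⟩
            · exact DS.wf _ h1 hqr
            · rw [h1, isSubterm_nonce_iff] at hqr; cases hqr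
        obtain ⟨r', hr', hx⟩ := hex
        have h4 := isSubterm_subst (e.τ s) hx
        rw [subst_var] at h4
        rcases sub_Cl e.hsub e.hS e.hsol ⟨_, h3 r' hr'⟩ h4 with h | h
        · exact .inl (e.NN_sub h)
        · exact .inr h
    | _ => simp [Term.IsVar] at hq
  · exact .inl ⟨q, θ, h, hq, rfl⟩

/-- A set containing all subterms of the small solution. -/
def B (e : Env DS S σ) : Set Term :=
  (e.δ '' N2 DS S σ e.P e.τ ∪ (fun v => Term.nonce (e.nn v)) '' N2 DS S σ e.P e.τ) ∪ {.nonce 0}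

theorem B_args (e : Env DS S σ) {g : ℕ} {args : List Term} (h : Term.func g args ∈ e.B) :
    ∀ a ∈ args, a ∈ e.B := by
  rcases h with (⟨v, hv, h⟩ | ⟨v, _, h⟩) | h
  · by_cases hf : e.Free v
    · rw [e.δ_free hf] at h
      simp only [φ, Term.func.injEq] at h
      obtain ⟨_, rfl⟩ := h
      intro a ha
      simp only [List.mem_cons, List.not_mem_nil, or_false] at ha
      rcases ha with rfl | rfl
      · exact .inl (.inr ⟨v, hv, rfl⟩)
      · cases hk : e.J v with
        | zero => rw [E]; exact .inr rfl
        | succ k =>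
          obtain ⟨t, ht, _⟩ := e.J_succ hf.1 hk
          rw [e.E_succ ht]
          exact .inl (.inl ⟨_, ⟨t, σ, .inl ⟨csTerms_sub (mem_csTerms ht), rfl⟩, rfl⟩, rfl⟩)
    · have hN : v ∈ N1 DS S σ e.P e.τ := by
        by_contra hN
        rcases e.N2_cases hv with h | h
        · exact hN h
        · exact hf ⟨h, hN⟩
      obtain ⟨q, θ, h1, h2, rfl⟩ := hN
      rw [e.δ_PP h1] at h
      cases q with
      | var x => simp [Term.IsVar] at h2
      | cst x => rw [subst_cst] at h; cases h
      | nonce x => rw [subst_nonce] at h; cases h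
      | func g' ts =>
        rw [subst_func] at h
        simp only [Term.func.injEq] at h
        obtain ⟨_, rfl⟩ := h
        intro a ha
        obtain ⟨t, ht, rfl⟩ := List.mem_map.1 ha
        have h3 := e.PP_sub h1 (.func ht (.refl _))
        rw [← e.δ_PP h3]
        exact .inl (.inl ⟨_, ⟨t, θ, h3, rfl⟩, rfl⟩)
  · cases h
  · cases h

theorem B_sub (e : Env DS S σ) {u w : Term} (h : Term.IsSubterm u w) (hw : w ∈ e.B) :
    u ∈ e.B := by
  induction h with
  | refl => exact hw
  | func hm _ ih => exact ih (e.B_args hw _ hm)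

theorem size_le (e : Env DS S σ) :
    sizeSubst e.σ' ≤ 2 * (1 + (ruleSub DS).ncard) * csSize S + 1 := by
  have hfin := N2_finite e.hmin
  have hB : subT e.σ'.img ⊆ e.B := by
    rintro u ⟨w, ⟨x, hx, rfl⟩, hu⟩
    rw [e.σ'_dom] at hx
    refine e.B_sub hu (.inl (.inl ⟨σ x, ⟨.var x, σ, .inl ⟨hx, rfl⟩, (subst_var _ _).symm⟩, ?_⟩))
    simp [σ', hx]
  have hBf : e.B.Finite := ((hfin.image _).union (hfin.image _)).union (Set.finite_singleton _)
  have h1 : e.B.ncard ≤ (N2 DS S σ e.P e.τ).ncard + (N2 DS S σ e.P e.τ).ncard + 1 := by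
    refine (Set.ncard_union_le _ _).trans ?_
    rw [Set.ncard_singleton]
    refine Nat.add_le_add_right ((Set.ncard_union_le _ _).trans ?_) 1
    exact Nat.add_le_add (Set.ncard_image_le hfin) (Set.ncard_image_le hfin)
  have h2 := N2_card e.hmin
  have h3 : sizeSubst e.σ' ≤ e.B.ncard := Set.ncard_le_ncard hB hBf
  have h4 : csSize S = (csSub S).ncard := rfl
  rw [h4]
  nlinarith

end Env

/-- Corollary 1: over a subterm deduction system with a free pairing rule, a
constraint system is satisfiable iff it has a solution of size polynomial in
`|Sub(S)|` (the polynomial depending only on the deduction system). -/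
theorem satisfiable_iff_small_solution (DS : DeductionSystem) (hsub : SubtermSystem DS)
    (hf : FreePairing DS) :
    ∃ p : Polynomial ℕ, ∀ S : CSystem, IsCS S →
      ((∃ σ : Subst, IsSolution DS S σ) ↔
        ∃ σ' : Subst, IsSolution DS S σ' ∧ sizeSubst σ' ≤ p.eval (csSize S)) := by
  refine ⟨Polynomial.C (2 * (1 + (ruleSub DS).ncard)) * Polynomial.X + 1, fun S hS => ?_⟩
  constructor
  · rintro ⟨σ, hσ⟩
    obtain ⟨e⟩ := exists_env hsub hf hS hσ
    refine ⟨e.σ', e.σ'_sol, e.size_le.trans (le_of_eq ?_)⟩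
    rw [Polynomial.eval_add, Polynomial.eval_one, Polynomial.eval_C_mul, Polynomial.eval_X]
  · rintro ⟨σ, hσ, _⟩
    exact ⟨σ, hσ⟩
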